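/- In a finite MDP with n states, if the initial distribution d0 is not almost-sure weakly synchronizing in T, then for every strategy σ, at most N_w = 2^n distributions in the sequence (M^σ_i) satisfy M^σ_i(T) > 1 − ε_w, where ε_w = α0 · α^{(n+2)·4^n} / n^{2^n + 1}, α is the smallest positive transition probability, and α0 the smallest positive probability in d0. -/

import Mathlib

open scoped BigOperators
open Classical Filter

/-- A finite Markov decision process with real transition probabilities. -/
structure MDP (Q A : Type) [Fintype Q] [Fintype A] where
  δ : Q → A → Q → ℝ
  δ_nonneg : ∀ q a q', 0 ≤ δ q a q'
  δ_sum : ∀ q a, ∑ q', δ q a q' = 1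

namespace MDP

variable {Q A : Type} [Fintype Q] [Fintype A]

/-- `d` is a probability distribution. -/
def IsDist (d : Q → ℝ) : Prop := (∀ q, 0 ≤ d q) ∧ ∑ q, d q = 1

/-- A (randomized, history-dependent) strategy maps a history (list of past
state-action pairs) and the current state to a distribution over actions. -/
def IsStrategy (σ : List (Q × A) → Q → A → ℝ) : Prop :=
  (∀ h q a, 0 ≤ σ h q a) ∧ ∀ h q, ∑ a, σ h q a = 1

/-- The probability of the finite path `qs` (with actions `as`) of length `i`,
under strategy `σ` from initial distribution `d0`. -/
noncomputable def pathProb (M : MDP Q A) (σ : List (Q × A) → Q → A → ℝ)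
    (d0 : Q → ℝ) (i : ℕ) (qs : Fin (i + 1) → Q) (as : Fin i → A) : ℝ :=
  d0 (qs 0) * ∏ j : Fin i,
    (σ (List.ofFn (fun k : Fin j.val =>
          (qs ⟨k.val, by have := k.isLt; have := j.isLt; omega⟩,
           as ⟨k.val, by have := k.isLt; have := j.isLt; omega⟩)))
        (qs j.castSucc) (as j))
      * M.δ (qs j.castSucc) (as j) (qs j.succ)

/-- The distribution over states after `i` steps (`M^σ_i`). -/
noncomputable def stepDist (M : MDP Q A) (σ : List (Q × A) → Q → A → ℝ)
    (d0 : Q → ℝ) (i : ℕ) (q : Q) : ℝ :=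
  ∑ qs : Fin (i + 1) → Q, ∑ as : Fin i → A,
    if qs (Fin.last i) = q then M.pathProb σ d0 i qs as else 0

/-- The probability mass that a (sub)distribution assigns to a set `T`. -/
noncomputable def mass (d : Q → ℝ) (T : Set Q) : ℝ := ∑ q, T.indicator d q

/-- The support of a (sub)distribution. -/
def supp {α : Type} (d : α → ℝ) : Set α := {q | 0 < d q}

/-- One-step sure predecessors of `Y`. -/
def Pre (M : MDP Q A) (Y : Set Q) : Set Q :=
  {q | ∃ a, ∀ q', 0 < M.δ q a q' → q' ∈ Y}

/-- Probability of reaching `T` within `i` steps. -/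
noncomputable def reachProb (M : MDP Q A) (σ : List (Q × A) → Q → A → ℝ)
    (d0 : Q → ℝ) (T : Set Q) (i : ℕ) : ℝ :=
  ∑ qs : Fin (i + 1) → Q, ∑ as : Fin i → A,
    if ∃ j, qs j ∈ T then M.pathProb σ d0 i qs as else 0

/-- `d0` is almost-sure winning for the reachability objective `◇T`:
some strategy reaches `T` with probability one. -/
def ASReach (M : MDP Q A) (d0 : Q → ℝ) (T : Set Q) : Prop :=
  ∃ σ, IsStrategy σ ∧ (⨆ i : ℕ, M.reachProb σ d0 T i) = 1

/-- `d0` is limit-sure eventually synchronizing in `T`. -/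
def LimitSureEventually (M : MDP Q A) (d0 : Q → ℝ) (T : Set Q) : Prop :=
  ∀ ε > (0 : ℝ), ∃ σ, IsStrategy σ ∧ ∃ i, 1 - ε ≤ mass (M.stepDist σ d0 i) T

/-- `d0` is almost-sure weakly synchronizing in `T`. -/
def ASWeakly (M : MDP Q A) (d0 : Q → ℝ) (T : Set Q) : Prop :=
  ∃ σ, IsStrategy σ ∧ ∀ ε > (0 : ℝ), {i : ℕ | 1 - ε ≤ mass (M.stepDist σ d0 i) T}.Infinite

/-- `d0` is almost-sure strongly synchronizing in `T`. -/
def ASStrongly (M : MDP Q A) (d0 : Q → ℝ) (T : Set Q) : Prop :=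
  ∃ σ, IsStrategy σ ∧ ∀ ε > (0 : ℝ), ∃ N, ∀ i ≥ N, 1 - ε ≤ mass (M.stepDist σ d0 i) T

/-- The uniform distribution on a set `S`. -/
noncomputable def uniformOn (S : Set Q) : Q → ℝ :=
  fun q => if q ∈ S then 1 / (S.ncard : ℝ) else 0

/-- The uniform strategy, playing all actions uniformly at random. -/
noncomputable def uniformStrategy (Q A : Type) [Fintype A] :
    List (Q × A) → Q → A → ℝ :=
  fun _ _ _ => 1 / (Fintype.card A : ℝ)

/-- Action `a` is allowed in `q` w.r.t. `S` if all its successors stay in `S`. -/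
def Allowed (M : MDP Q A) (S : Set Q) (q : Q) (a : A) : Prop :=
  ∀ q', 0 < M.δ q a q' → q' ∈ S

/-- Edge relation within `S` given the allowed actions. -/
def ECEdge (M : MDP Q A) (S : Set Q) (q q' : Q) : Prop :=
  q ∈ S ∧ q' ∈ S ∧ ∃ a, M.Allowed S q a ∧ 0 < M.δ q a q'

/-- `S` is an end-component: closed and strongly connected via allowed actions. -/
def IsEC (M : MDP Q A) (S : Set Q) : Prop :=
  (∀ q ∈ S, ∃ a, M.Allowed S q a) ∧
  ∀ q ∈ S, ∀ q' ∈ S, Relation.ReflTransGen (M.ECEdge S) q q'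

/-- The union of all end-components. -/
def ECUnion (M : MDP Q A) : Set Q := ⋃₀ {S | M.IsEC S}

/-- Positive always synchronizing in `T`. -/
def PosAlways (M : MDP Q A) (d0 : Q → ℝ) (T : Set Q) : Prop :=
  ∃ σ, IsStrategy σ ∧ ∀ i, 0 < mass (M.stepDist σ d0 i) T

/-- Positive eventually synchronizing in `T`. -/
def PosEvent (M : MDP Q A) (d0 : Q → ℝ) (T : Set Q) : Prop :=
  ∃ σ, IsStrategy σ ∧ ∃ i, 0 < mass (M.stepDist σ d0 i) T

/-- Positive weakly synchronizing in `T`. -/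
def PosWeakly (M : MDP Q A) (d0 : Q → ℝ) (T : Set Q) : Prop :=
  ∃ σ, IsStrategy σ ∧ ∀ N, ∃ i ≥ N, 0 < mass (M.stepDist σ d0 i) T

/-- Positive strongly synchronizing in `T`. -/
def PosStrongly (M : MDP Q A) (d0 : Q → ℝ) (T : Set Q) : Prop :=
  ∃ σ, IsStrategy σ ∧ ∃ N, ∀ i ≥ N, 0 < mass (M.stepDist σ d0 i) T

/-- Bounded always synchronizing in `T`. -/
def BndAlways (M : MDP Q A) (d0 : Q → ℝ) (T : Set Q) : Prop :=
  ∃ σ, IsStrategy σ ∧ ∃ ε > (0 : ℝ), ∀ i, ε < mass (M.stepDist σ d0 i) T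

/-- Bounded eventually synchronizing in `T`. -/
def BndEvent (M : MDP Q A) (d0 : Q → ℝ) (T : Set Q) : Prop :=
  ∃ σ, IsStrategy σ ∧ ∃ ε > (0 : ℝ), ∃ i, ε < mass (M.stepDist σ d0 i) T

/-- Bounded weakly synchronizing in `T`. -/
def BndWeakly (M : MDP Q A) (d0 : Q → ℝ) (T : Set Q) : Prop :=
  ∃ σ, IsStrategy σ ∧ ∃ ε > (0 : ℝ), ∀ N, ∃ i ≥ N, ε < mass (M.stepDist σ d0 i) T

/-- Bounded strongly synchronizing in `T`. -/
def BndStrongly (M : MDP Q A) (d0 : Q → ℝ) (T : Set Q) : Prop :=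
  ∃ σ, IsStrategy σ ∧ ∃ ε > (0 : ℝ), ∃ N, ∀ i ≥ N, ε < mass (M.stepDist σ d0 i) T

end MDP


namespace MDP

variable {Q A : Type} [Fintype Q] [Fintype A]

/-- history list of a path -/
def hist {i : ℕ} (qs : Fin (i + 1) → Q) (as : Fin i → A) : List (Q × A) :=
  List.ofFn (fun k : Fin i => (qs k.castSucc, as k))

/-- joint weight of being in `q` after `i` steps and choosing `a` -/
noncomputable def wt (M : MDP Q A) (σ : List (Q × A) → Q → A → ℝ)
    (d0 : Q → ℝ) (i : ℕ) (q : Q) (a : A) : ℝ :=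
  ∑ qs : Fin (i + 1) → Q, ∑ as : Fin i → A,
    if qs (Fin.last i) = q then M.pathProb σ d0 i qs as * σ (hist qs as) q a else 0

theorem pathProb_snoc (M : MDP Q A) (σ : List (Q × A) → Q → A → ℝ)
    (d0 : Q → ℝ) (i : ℕ) (qs : Fin (i + 1) → Q) (as : Fin i → A) (q' : Q) (a : A) :
    M.pathProb σ d0 (i + 1) (Fin.snoc (α := fun _ => Q) qs q') (Fin.snoc (α := fun _ => A) as a)
      = M.pathProb σ d0 i qs as *
        (σ (hist qs as) (qs (Fin.last i)) a * M.δ (qs (Fin.last i)) a q') := by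
  unfold pathProb
  rw [Fin.prod_univ_castSucc, ← mul_assoc]
  have hq : ∀ (k : ℕ) (h : k < i + 2) (h' : k < i + 1),
      (Fin.snoc (α := fun _ => Q) qs q') ⟨k, h⟩ = qs ⟨k, h'⟩ := by
    intro k h h'
    exact Fin.snoc_castSucc (α := fun _ => Q) q' qs ⟨k, h'⟩
  have ha : ∀ (k : ℕ) (h : k < i + 1) (h' : k < i),
      (Fin.snoc (α := fun _ => A) as a) ⟨k, h⟩ = as ⟨k, h'⟩ := by
    intro k h h'
    exact Fin.snoc_castSucc (α := fun _ => A) a as ⟨k, h'⟩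
  have hlast : (Fin.snoc (α := fun _ => Q) qs q') (Fin.last (i+1)) = q' := Fin.snoc_last _ _
  have halast : (Fin.snoc (α := fun _ => A) as a) (Fin.last i) = a := Fin.snoc_last _ _
  congr 1
  · refine congrArg₂ (· * ·) ?_ ?_
    · exact congrArg d0 (hq 0 _ (by omega))
    · apply Finset.prod_congr rfl
      intro j _
      have e1 : (Fin.snoc (α := fun _ => Q) qs q') j.castSucc.castSucc = qs j.castSucc :=
        Fin.snoc_castSucc (α := fun _ => Q) q' qs j.castSucc
      have e2 : (Fin.snoc (α := fun _ => A) as a) j.castSucc = as j :=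
        Fin.snoc_castSucc (α := fun _ => A) a as j
      have e3 : (Fin.snoc (α := fun _ => Q) qs q') j.castSucc.succ = qs j.succ :=
        Fin.snoc_castSucc (α := fun _ => Q) q' qs j.succ
      rw [e1, e2, e3]
      congr 2
      congr 1
      congr 1
      funext k
      have hk : k.val < i := lt_trans k.isLt j.isLt
      exact Prod.ext (hq k.val _ (by omega)) (ha k.val _ hk)
  · have e1 : (Fin.snoc (α := fun _ => Q) qs q') (Fin.last i).castSucc = qs (Fin.last i) :=
        Fin.snoc_castSucc (α := fun _ => Q) q' qs (Fin.last i)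
    have e3 : (Fin.snoc (α := fun _ => Q) qs q') (Fin.last i).succ = q' := hlast
    rw [e1, halast, e3]
    congr 2
    unfold hist
    congr 1
    congr 1
    funext k
    have hk : k.val < i := k.isLt
    exact Prod.ext (hq k.val _ (by omega)) (ha k.val _ hk)

theorem sum_snoc {X : Type} [Fintype X] (i : ℕ) (F : (Fin (i + 1) → X) → ℝ) :
    ∑ f, F f = ∑ f : Fin i → X, ∑ x, F (Fin.snoc (α := fun _ => X) f x) := by
  rw [← Equiv.sum_comp (Fin.snocEquiv (fun _ : Fin (i+1) => X)) F, Fintype.sum_prod_type_right]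
  rfl

theorem stepDist_succ (M : MDP Q A) (σ : List (Q × A) → Q → A → ℝ)
    (d0 : Q → ℝ) (i : ℕ) (q' : Q) :
    M.stepDist σ d0 (i + 1) q' = ∑ q, ∑ a, M.wt σ d0 i q a * M.δ q a q' := by
  have e1 : M.stepDist σ d0 (i + 1) q' = ∑ qs : Fin (i + 1) → Q, ∑ as : Fin i → A, ∑ a,
      M.pathProb σ d0 i qs as *
        (σ (hist qs as) (qs (Fin.last i)) a * M.δ (qs (Fin.last i)) a q') := by
    unfold stepDist
    rw [sum_snoc]
    refine Finset.sum_congr rfl fun qs _ => ?_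
    rw [Finset.sum_comm, sum_snoc]
    refine Finset.sum_congr rfl fun as _ => Finset.sum_congr rfl fun a _ => ?_
    simp only [pathProb_snoc, Fin.snoc_last]
    simp
  rw [e1]
  unfold wt
  simp only [Finset.sum_mul]
  have : ∀ q, ∑ a, ∑ qs : Fin (i + 1) → Q, ∑ as : Fin i → A,
      (if qs (Fin.last i) = q then M.pathProb σ d0 i qs as * σ (hist qs as) q a else 0) * M.δ q a q'
      = ∑ qs : Fin (i + 1) → Q, ∑ as : Fin i → A, ∑ a,
      (if qs (Fin.last i) = q then M.pathProb σ d0 i qs as * σ (hist qs as) q a else 0) * M.δ q a q' := by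
    intro q
    rw [Finset.sum_comm]
    exact Finset.sum_congr rfl fun qs _ => Finset.sum_comm
  simp only [this]
  symm
  rw [Finset.sum_comm]
  refine Finset.sum_congr rfl fun qs _ => ?_
  rw [Finset.sum_comm]
  refine Finset.sum_congr rfl fun as _ => ?_
  rw [Finset.sum_comm]
  refine Finset.sum_congr rfl fun a _ => ?_
  simp [ite_mul, zero_mul, mul_assoc]

theorem stepDist_zero (M : MDP Q A) (σ : List (Q × A) → Q → A → ℝ) (d0 : Q → ℝ) :
    M.stepDist σ d0 0 = d0 := by
  funext q
  unfold stepDist pathProb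
  rw [sum_snoc]
  simp
  have : ∀ x, (Fin.snoc (α := fun _ => Q) (default : Fin 0 → Q) x : Fin 1 → Q) 0 = x :=
    fun x => Fin.snoc_last (α := fun _ => Q) (n := 0) _ _
  simp [this]

theorem pathProb_nonneg (M : MDP Q A) {σ : List (Q × A) → Q → A → ℝ} (hσ : IsStrategy σ)
    {d0 : Q → ℝ} (hd : ∀ q, 0 ≤ d0 q) (i : ℕ) (qs as) : 0 ≤ M.pathProb σ d0 i qs as :=
  mul_nonneg (hd _) (Finset.prod_nonneg fun _ _ => mul_nonneg (hσ.1 _ _ _) (M.δ_nonneg _ _ _))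

theorem wt_nonneg (M : MDP Q A) {σ : List (Q × A) → Q → A → ℝ} (hσ : IsStrategy σ)
    {d0 : Q → ℝ} (hd : ∀ q, 0 ≤ d0 q) (i q a) : 0 ≤ M.wt σ d0 i q a := by
  refine Finset.sum_nonneg fun qs _ => Finset.sum_nonneg fun as _ => ?_
  split_ifs
  · exact mul_nonneg (M.pathProb_nonneg hσ hd _ _ _) (hσ.1 _ _ _)
  · exact le_rfl

theorem wt_sum (M : MDP Q A) {σ : List (Q × A) → Q → A → ℝ} (hσ : IsStrategy σ)
    (d0 : Q → ℝ) (i q) : ∑ a, M.wt σ d0 i q a = M.stepDist σ d0 i q := by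
  unfold wt stepDist
  rw [Finset.sum_comm]
  refine Finset.sum_congr rfl fun qs _ => ?_
  rw [Finset.sum_comm]
  refine Finset.sum_congr rfl fun as _ => ?_
  split_ifs
  · rw [← Finset.mul_sum, hσ.2, mul_one]
  · simp

theorem wt_det (M : MDP Q A) (π : ℕ → Q → A) (d0 : Q → ℝ) (i q a) :
    M.wt (fun h q a => if a = π h.length q then 1 else 0) d0 i q a
     = M.stepDist (fun h q a => if a = π h.length q then 1 else 0) d0 i q
        * if a = π i q then 1 else 0 := by
  unfold wt stepDist
  simp only [Finset.sum_mul]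
  refine Finset.sum_congr rfl fun qs _ => Finset.sum_congr rfl fun as _ => ?_
  simp only [hist, List.length_ofFn, ite_mul, zero_mul]

theorem stepDist_isDist (M : MDP Q A) {σ : List (Q × A) → Q → A → ℝ} (hσ : IsStrategy σ)
    {d0 : Q → ℝ} (hd : IsDist d0) (i : ℕ) : IsDist (M.stepDist σ d0 i) := by
  induction i with
  | zero => rw [stepDist_zero]; exact hd
  | succ i ih =>
    refine ⟨fun q => ?_, ?_⟩
    · rw [stepDist_succ]
      exact Finset.sum_nonneg fun _ _ => Finset.sum_nonneg fun _ _ =>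
        mul_nonneg (M.wt_nonneg hσ hd.1 _ _ _) (M.δ_nonneg _ _ _)
    · simp only [stepDist_succ]
      rw [Finset.sum_comm, ← ih.2]
      refine Finset.sum_congr rfl fun q _ => ?_
      rw [Finset.sum_comm, ← M.wt_sum hσ]
      refine Finset.sum_congr rfl fun a _ => ?_
      rw [← Finset.mul_sum, M.δ_sum, mul_one]

/-- one deterministic step -/
noncomputable def st (M : MDP Q A) (π : Q → A) (d : Q → ℝ) : Q → ℝ :=
  fun q' => ∑ q, d q * M.δ q (π q) q'

/-- run of deterministic Markov policy -/
noncomputable def dd (M : MDP Q A) (π : ℕ → Q → A) (d : Q → ℝ) : ℕ → Q → ℝ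
  | 0 => d
  | i + 1 => M.st (π i) (dd M π d i)

theorem stepDist_det (M : MDP Q A) (π : ℕ → Q → A) (d0 : Q → ℝ) (i : ℕ) :
    M.stepDist (fun h q a => if a = π h.length q then 1 else 0) d0 i = M.dd π d0 i := by
  induction i with
  | zero => exact stepDist_zero _ _ _
  | succ i ih =>
    funext q'
    rw [stepDist_succ]
    simp only [wt_det, ih, dd, st]
    refine Finset.sum_congr rfl fun q _ => ?_
    simp

theorem isStrategy_det (π : ℕ → Q → A) :
    IsStrategy (fun (h : List (Q × A)) q a => if a = π h.length q then (1:ℝ) else 0) := by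
  refine ⟨fun h q a => ?_, fun h q => ?_⟩
  · positivity
  · simp

theorem dd_congr (M : MDP Q A) {π π' : ℕ → Q → A} (d : Q → ℝ) (n : ℕ)
    (h : ∀ i < n, π i = π' i) : M.dd π d n = M.dd π' d n := by
  induction n with
  | zero => rfl
  | succ n ih =>
    simp only [dd]
    rw [h n (by omega), ih fun i hi => h i (by omega)]

theorem dd_append (M : MDP Q A) (π π' : ℕ → Q → A) (d : Q → ℝ) (n m : ℕ) :
    M.dd (fun i => if i < n then π i else π' (i - n)) d (n + m) = M.dd π' (M.dd π d n) m := by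
  induction m with
  | zero => exact M.dd_congr d n fun i hi => by simp [hi]
  | succ m ih =>
    rw [← add_assoc]
    simp only [dd]
    rw [ih]
    simp

theorem st_isDist (M : MDP Q A) (π : Q → A) {d : Q → ℝ} (hd : IsDist d) : IsDist (M.st π d) := by
  refine ⟨fun q => Finset.sum_nonneg fun _ _ => mul_nonneg (hd.1 _) (M.δ_nonneg _ _ _), ?_⟩
  unfold st
  rw [Finset.sum_comm, ← hd.2]
  refine Finset.sum_congr rfl fun q _ => ?_
  rw [← Finset.mul_sum, M.δ_sum, mul_one]

theorem dd_isDist (M : MDP Q A) (π : ℕ → Q → A) {d : Q → ℝ} (hd : IsDist d) (n : ℕ) :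
    IsDist (M.dd π d n) := by
  induction n with
  | zero => exact hd
  | succ n ih => exact M.st_isDist _ ih

/-- gluing finite blocks into an infinite policy -/
theorem glue (M : MDP Q A) (d0 : Q → ℝ) (T : Set Q) (I : (Q → ℝ) → Prop) [Nonempty A]
    (h0 : I d0)
    (hstep : ∀ d, I d → ∀ ε > (0:ℝ), ∃ n ≥ 1, ∃ π : ℕ → Q → A,
      I (M.dd π d n) ∧ 1 - ε ≤ mass (M.dd π d n) T) :
    M.ASWeakly d0 T := by
  have key : ∀ (s : {p : ℕ × (ℕ → Q → A) // I (M.dd p.2 d0 p.1)}) (k : ℕ),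
      ∃ s' : {p : ℕ × (ℕ → Q → A) // I (M.dd p.2 d0 p.1)},
        s.1.1 < s'.1.1 ∧ (∀ i < s.1.1, s'.1.2 i = s.1.2 i) ∧
        1 - 1 / ((k:ℝ) + 1) ≤ mass (M.dd s'.1.2 d0 s'.1.1) T := by
    rintro ⟨⟨n, π⟩, hI⟩ k
    obtain ⟨m, hm, π', hI', hmass⟩ := hstep _ hI (1 / ((k:ℝ)+1)) (by positivity)
    refine ⟨⟨⟨n + m, fun i => if i < n then π i else π' (i - n)⟩, ?_⟩, ?_, ?_, ?_⟩
    · simp only [dd_append]; exact hI'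
    · simp only; omega
    · intro i hi
      simp only at hi ⊢
      simp [hi]
    · simp only [dd_append]; exact hmass
  choose F hF1 hF2 hF3 using key
  let a0 : A := Classical.arbitrary A
  let S : ℕ → {p : ℕ × (ℕ → Q → A) // I (M.dd p.2 d0 p.1)} :=
    fun k => Nat.rec ⟨(0, fun _ _ => a0), h0⟩ (fun k s => F s k) k
  have hS : ∀ k, S (k+1) = F (S k) k := fun k => rfl
  have hmono : StrictMono fun k => (S k).1.1 := strictMono_nat_of_lt_succ fun k => by
    simp only [hS]; exact hF1 _ _
  have hcoh : ∀ k l, k ≤ l → ∀ i < (S k).1.1, (S l).1.2 i = (S k).1.2 i := by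
    intro k l hkl
    induction l, hkl using Nat.le_induction with
    | base => intro i _; rfl
    | succ l hl ih =>
      intro i hi
      rw [hS, hF2 _ _ i (lt_of_lt_of_le hi (hmono.monotone hl)), ih i hi]
  let π : ℕ → Q → A := fun i => (S (i+1)).1.2 i
  have hπ : ∀ k, M.dd π d0 (S k).1.1 = M.dd (S k).1.2 d0 (S k).1.1 := by
    intro k
    refine M.dd_congr d0 _ fun i hi => ?_
    rcases le_total k (i+1) with h | h
    · exact hcoh k (i+1) h i hi
    · exact (hcoh (i+1) k h i (lt_of_lt_of_le (Nat.lt_succ_self i) (hmono.le_apply))).symm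
  refine ⟨_, isStrategy_det π, fun ε hε => ?_⟩
  obtain ⟨K, hK⟩ := exists_nat_one_div_lt hε
  rw [Set.infinite_iff_exists_gt]
  intro N
  refine ⟨(S (K + N + 1)).1.1, ?_, ?_⟩
  · simp only [Set.mem_ofPred_eq, stepDist_det]
    have e := hF3 (S (K + N)) (K + N)
    rw [← hS, ← hπ (K + N + 1)] at e
    refine le_trans ?_ e
    have : 1 / (((K + N : ℕ) : ℝ) + 1) ≤ 1 / ((K:ℝ) + 1) := by
      apply one_div_le_one_div_of_le (by positivity)
      have : (K:ℝ) ≤ ((K + N : ℕ) : ℝ) := by exact_mod_cast Nat.le_add_right _ _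
      linarith
    linarith
  · have h1 : K + N + 1 ≤ (S (K + N + 1)).1.1 := hmono.le_apply
    omega

end MDP


namespace MDP

variable {Q A : Type} [Fintype Q] [Fintype A]

/-- expectation of `φ` after playing `a` in `q` -/
noncomputable def ex (M : MDP Q A) (q : Q) (a : A) (φ : Q → ℝ) : ℝ := ∑ q', M.δ q a q' * φ q'

theorem ex_mono (M : MDP Q A) {q : Q} {a : A} {φ ψ : Q → ℝ}
    (h : ∀ q', 0 < M.δ q a q' → φ q' ≤ ψ q') : M.ex q a φ ≤ M.ex q a ψ := by
  refine Finset.sum_le_sum fun q' _ => ?_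
  rcases (M.δ_nonneg q a q').eq_or_lt with h0 | h0
  · simp [← h0]
  · exact mul_le_mul_of_nonneg_left (h q' h0) h0.le

theorem ex_const (M : MDP Q A) (q : Q) (a : A) (c : ℝ) : M.ex q a (fun _ => c) = c := by
  unfold ex
  rw [← Finset.sum_mul, M.δ_sum, one_mul]

theorem ex_le (M : MDP Q A) {q : Q} {a : A} {φ : Q → ℝ} {c : ℝ}
    (h : ∀ q', 0 < M.δ q a q' → φ q' ≤ c) : M.ex q a φ ≤ c := by
  rw [← M.ex_const q a c]; exact M.ex_mono h

theorem le_ex (M : MDP Q A) {q : Q} {a : A} {φ : Q → ℝ} {c : ℝ}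
    (h : ∀ q', 0 < M.δ q a q' → c ≤ φ q') : c ≤ M.ex q a φ := by
  rw [← M.ex_const q a c]; exact M.ex_mono h

theorem ex_add_const (M : MDP Q A) (q : Q) (a : A) (φ : Q → ℝ) (c : ℝ) :
    M.ex q a (fun q' => φ q' + c) = M.ex q a φ + c := by
  conv_rhs => rw [← M.ex_const q a c]
  unfold ex
  rw [← Finset.sum_add_distrib]
  exact Finset.sum_congr rfl fun _ _ => mul_add _ _ _

theorem le_ex_of_hit (M : MDP Q A) {α : ℝ} (hαδ : ∀ q a q', 0 < M.δ q a q' → α ≤ M.δ q a q')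
    {q : Q} {a : A} {φ : Q → ℝ} {c : ℝ} (hφ : ∀ q', 0 ≤ φ q') (hc : 0 ≤ c)
    {q' : Q} (hq : 0 < M.δ q a q') (hq' : c ≤ φ q') : α * c ≤ M.ex q a φ := by
  refine le_trans ?_ (Finset.single_le_sum
    (fun x _ => mul_nonneg (M.δ_nonneg q a x) (hφ x)) (Finset.mem_univ q'))
  exact mul_le_mul (hαδ _ _ _ hq) hq' hc hq.le

theorem ex_eq_max (M : MDP Q A) {q : Q} {a : A} {φ : Q → ℝ} {c : ℝ}
    (h : ∀ q', 0 < M.δ q a q' → φ q' ≤ c) (hc : c ≤ M.ex q a φ)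
    (q' : Q) (hq : 0 < M.δ q a q') : φ q' = c := by
  by_contra hne
  have hlt : φ q' < c := lt_of_le_of_ne (h q' hq) hne
  have : M.ex q a φ < M.ex q a (fun _ => c) := by
    refine Finset.sum_lt_sum (fun x _ => ?_) ⟨q', Finset.mem_univ _, ?_⟩
    · rcases (M.δ_nonneg q a x).eq_or_lt with h0 | h0
      · simp [← h0]
      · exact mul_le_mul_of_nonneg_left (h x h0) h0.le
    · exact mul_lt_mul_of_pos_left hlt hq
  rw [ex_const] at this
  linarith

/-- Bellman recursion with restricted actions -/
noncomputable def bell (M : MDP Q A) (ok : ℕ → Q → A → Prop) (φ : Q → ℝ) : ℕ → Q → ℝ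
  | 0 => φ
  | s + 1 => fun q => ⨅ a : {a // ok s q a}, M.ex q a.1 (bell M ok φ s)

theorem bell_le (M : MDP Q A) {ok : ℕ → Q → A → Prop} (φ : Q → ℝ) {s : ℕ} {q : Q} {a : A}
    (h : ok s q a) : M.bell ok φ (s + 1) q ≤ M.ex q a (M.bell ok φ s) :=
  ciInf_le (f := fun a : {a // ok s q a} => M.ex q a.1 (M.bell ok φ s))
    (Set.finite_range _).bddBelow ⟨a, h⟩

theorem bell_attain (M : MDP Q A) {ok : ℕ → Q → A → Prop} (φ : Q → ℝ) {s : ℕ} {q : Q}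
    (h : ∃ a, ok s q a) :
    ∃ a, ok s q a ∧ M.bell ok φ (s + 1) q = M.ex q a (M.bell ok φ s) := by
  haveI : Nonempty {a // ok s q a} := ⟨⟨h.choose, h.choose_spec⟩⟩
  obtain ⟨a, ha⟩ := exists_eq_ciInf_of_finite
    (f := fun a : {a // ok s q a} => M.ex q a.1 (M.bell ok φ s))
  exact ⟨a.1, a.2, ha.symm⟩

theorem bell_mem (M : MDP Q A) (ok : ℕ → Q → A → Prop) {φ : Q → ℝ}
    (h0 : ∀ q, 0 ≤ φ q) (h1 : ∀ q, φ q ≤ 1) (s : ℕ) :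
    ∀ q, 0 ≤ M.bell ok φ s q ∧ M.bell ok φ s q ≤ 1 := by
  induction s with
  | zero => exact fun q => ⟨h0 q, h1 q⟩
  | succ s ih =>
    intro q
    by_cases h : ∃ a, ok s q a
    · obtain ⟨a, _, ha⟩ := M.bell_attain φ h
      rw [ha]
      exact ⟨M.le_ex fun q' _ => (ih q').1, M.ex_le fun q' _ => (ih q').2⟩
    · haveI : IsEmpty {a // ok s q a} := ⟨fun a => h ⟨a.1, a.2⟩⟩
      have : M.bell ok φ (s + 1) q = 0 := Real.iInf_of_isEmpty _
      rw [this]; norm_num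

/-- indicator of the complement -/
noncomputable def ind (S : Set Q) (q : Q) : ℝ := if q ∈ S then 0 else 1

theorem ind_nonneg (S : Set Q) (q : Q) : 0 ≤ ind S q := by unfold ind; split_ifs <;> norm_num
theorem ind_le (S : Set Q) (q : Q) : ind S q ≤ 1 := by unfold ind; split_ifs <;> norm_num
theorem ind_in {S : Set Q} {q : Q} (h : q ∈ S) : ind S q = 0 := by simp [ind, h]
theorem ind_out {S : Set Q} {q : Q} (h : q ∉ S) : ind S q = 1 := by simp [ind, h]

/-- minimal probability to miss `S` after `s` steps -/
noncomputable def ff (M : MDP Q A) (S : Set Q) : ℕ → Q → ℝ := M.bell (fun _ _ _ => True) (ind S)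

/-- iterated predecessors -/
def Zs (M : MDP Q A) (S : Set Q) : ℕ → Set Q
  | 0 => S
  | s + 1 => M.Pre (Zs M S s)

theorem ff_nonneg (M : MDP Q A) (S : Set Q) (s q) : 0 ≤ M.ff S s q :=
  (M.bell_mem _ (ind_nonneg S) (ind_le S) s q).1
theorem ff_le_one (M : MDP Q A) (S : Set Q) (s q) : M.ff S s q ≤ 1 :=
  (M.bell_mem _ (ind_nonneg S) (ind_le S) s q).2
theorem ff_le (M : MDP Q A) (S : Set Q) (s q a) : M.ff S (s + 1) q ≤ M.ex q a (M.ff S s) :=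
  M.bell_le (ok := fun _ _ _ => True) _ trivial
theorem ff_attain [Nonempty A] (M : MDP Q A) (S : Set Q) (s q) :
    ∃ a, M.ff S (s + 1) q = M.ex q a (M.ff S s) := by
  obtain ⟨a, _, h⟩ := M.bell_attain (ok := fun _ _ _ => True) (ind S) (s := s) (q := q)
    ⟨Classical.arbitrary A, trivial⟩
  exact ⟨a, h⟩

theorem ff_zero (M : MDP Q A) (S : Set Q) (s : ℕ) : ∀ q ∈ M.Zs S s, M.ff S s q = 0 := by
  induction s with
  | zero => exact fun q h => ind_in h
  | succ s ih =>
    rintro q ⟨a, ha⟩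
    refine le_antisymm ((M.ff_le S s q a).trans (M.ex_le fun q' h => ?_)) (M.ff_nonneg _ _ _)
    exact (ih q' (ha q' h)).le

theorem ff_lb [Nonempty A] (M : MDP Q A) {α : ℝ} (hα : 0 < α)
    (hαδ : ∀ q a q', 0 < M.δ q a q' → α ≤ M.δ q a q') (S : Set Q) (s : ℕ) :
    ∀ q, q ∉ M.Zs S s → α ^ s ≤ M.ff S s q := by
  induction s with
  | zero =>
    intro q h
    have : M.ff S 0 q = 1 := ind_out h
    simp [this]
  | succ s ih =>
    intro q h
    obtain ⟨a, ha⟩ := M.ff_attain S s q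
    rw [ha, pow_succ']
    have : ∃ q', 0 < M.δ q a q' ∧ q' ∉ M.Zs S s := by
      by_contra hcon
      push Not at hcon
      exact h ⟨a, hcon⟩
    obtain ⟨q', h1, h2⟩ := this
    exact M.le_ex_of_hit hαδ (M.ff_nonneg S s) (by positivity) h1 (ih q' h2)

theorem ff_subadd [Nonempty A] (M : MDP Q A) (S : Set Q) {b : ℕ} {e : ℝ} (he : 0 ≤ e)
    (h : ∀ q ∈ S, M.ff S b q ≤ e) (a : ℕ) : ∀ q, M.ff S (a + b) q ≤ M.ff S a q + e := by
  induction a with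
  | zero =>
    intro q
    rw [zero_add]
    by_cases hq : q ∈ S
    · exact (h q hq).trans (by linarith [M.ff_nonneg S 0 q])
    · have : M.ff S 0 q = 1 := ind_out hq
      linarith [M.ff_le_one S b q]
  | succ a ih =>
    intro q
    obtain ⟨x, hx⟩ := M.ff_attain S a q
    rw [hx, ← ex_add_const, show a + 1 + b = (a + b) + 1 by ring]
    exact (M.ff_le S _ q x).trans (M.ex_mono fun q' _ => ih q')

/-- eventual periodicity of predecessors -/
theorem Zs_periodic (M : MDP Q A) (S : Set Q) : ∃ k r : ℕ, 0 < r ∧ r ≤ 2 ^ Fintype.card Q ∧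
    k ≤ 2 ^ Fintype.card Q ∧ r ∣ k ∧ ∀ s ≥ k, M.Zs S (s + r) = M.Zs S s := by
  have hcard : Fintype.card (Set Q) < Fintype.card (Fin (2 ^ Fintype.card Q + 1)) := by
    simp
  obtain ⟨x, y, hxy, he⟩ := Fintype.exists_ne_map_eq_of_card_lt
    (fun i : Fin (2 ^ Fintype.card Q + 1) => M.Zs S i.val) hcard
  have : ∃ a b : ℕ, a < b ∧ b ≤ 2 ^ Fintype.card Q ∧ M.Zs S a = M.Zs S b := by
    rcases lt_or_gt_of_ne (fun h => hxy (Fin.ext h) : x.val ≠ y.val) with h | h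
    · exact ⟨x, y, h, by omega, he⟩
    · exact ⟨y, x, h, by omega, he.symm⟩
  obtain ⟨a, b, hab, hb, hZ⟩ := this
  have hper : ∀ i, M.Zs S (b + i) = M.Zs S (a + i) := by
    intro i
    induction i with
    | zero => exact hZ.symm
    | succ i ih =>
      show M.Pre (M.Zs S (b + i)) = M.Pre (M.Zs S (a + i))
      rw [ih]
  have hr : 0 < b - a := by omega
  have h1 := Nat.div_add_mod (a + (b - a) - 1) (b - a)
  have h2 := Nat.mod_lt (a + (b - a) - 1) hr
  refine ⟨(b - a) * ((a + (b - a) - 1) / (b - a)), b - a, hr, by omega, by omega,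
    Dvd.intro _ rfl, fun s hs => ?_⟩
  have h3 : a ≤ s := by omega
  have := hper (s - a)
  rwa [show b + (s - a) = s + (b - a) by omega, show a + (s - a) = s by omega] at this

theorem evolve (M : MDP Q A) (D : ℕ → Set Q) (γ : ℕ → Q → ℝ) [Nonempty A]
    (hD : ∀ s, ∀ q ∈ D (s + 1), ∃ a, (∀ q', 0 < M.δ q a q' → q' ∈ D s) ∧
      M.ex q a (γ s) ≤ γ (s + 1) q) (n : ℕ) :
    ∀ d : Q → ℝ, IsDist d → (∀ q, d q ≠ 0 → q ∈ D n) →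
      ∃ π : ℕ → Q → A, (∀ q, M.dd π d n q ≠ 0 → q ∈ D 0) ∧
        ∑ q, M.dd π d n q * γ 0 q ≤ ∑ q, d q * γ n q := by
  induction n with
  | zero => exact fun d _ hs => ⟨fun _ _ => Classical.arbitrary A, hs, le_rfl⟩
  | succ n ih =>
    intro d hd hs
    have : ∀ q, ∃ a, d q ≠ 0 → (∀ q', 0 < M.δ q a q' → q' ∈ D n) ∧
      M.ex q a (γ n) ≤ γ (n + 1) q := by
      intro q
      by_cases h : d q = 0
      · exact ⟨Classical.arbitrary A, fun h' => absurd h h'⟩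
      · obtain ⟨a, ha⟩ := hD n q (hs q h)
        exact ⟨a, fun _ => ha⟩
    choose p hp using this
    obtain ⟨π, h1, h2⟩ := ih (M.st p d) (M.st_isDist p hd) (by
      intro q' hq'
      obtain ⟨q, _, hq⟩ := Finset.exists_ne_zero_of_sum_ne_zero hq'
      refine (hp q (left_ne_zero_of_mul hq)).1 q' ?_
      exact lt_of_le_of_ne (M.δ_nonneg _ _ _) (right_ne_zero_of_mul hq).symm)
    have e : M.dd (fun i => if i < 1 then p else π (i - 1)) d (n + 1) = M.dd π (M.st p d) n := by
      rw [add_comm n 1]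
      exact M.dd_append (fun _ => p) π d 1 n
    refine ⟨fun i => if i < 1 then p else π (i - 1), ?_, ?_⟩
    · rw [e]; exact h1
    · rw [e]
      refine h2.trans ?_
      have : ∑ q', M.st p d q' * γ n q' = ∑ q, d q * M.ex q (p q) (γ n) := by
        simp only [st, ex, Finset.sum_mul, Finset.mul_sum]
        rw [Finset.sum_comm]
        exact Finset.sum_congr rfl fun q _ => Finset.sum_congr rfl fun q' _ => by ring
      rw [this]
      refine Finset.sum_le_sum fun q _ => ?_
      by_cases h : d q = 0
      · simp [h]
      · exact mul_le_mul_of_nonneg_left (hp q h).2 (hd.1 q)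

theorem ff_lower (M : MDP Q A) {σ : List (Q × A) → Q → A → ℝ} (hσ : IsStrategy σ)
    {d0 : Q → ℝ} (hd : IsDist d0) (S : Set Q) (m : ℕ) : ∀ i,
    ∑ q, M.stepDist σ d0 i q * M.ff S m q ≤ ∑ q, M.stepDist σ d0 (i + m) q * ind S q := by
  induction m with
  | zero => intro i; exact le_rfl
  | succ m ih =>
    intro i
    have := ih (i + 1)
    rw [show i + 1 + m = i + (m + 1) by ring] at this
    refine le_trans ?_ this
    have e : ∑ q', M.stepDist σ d0 (i + 1) q' * M.ff S m q'
        = ∑ q, ∑ a, M.wt σ d0 i q a * M.ex q a (M.ff S m) := by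
      simp only [stepDist_succ, ex, Finset.sum_mul, Finset.mul_sum]
      rw [Finset.sum_comm]
      refine Finset.sum_congr rfl fun q _ => ?_
      rw [Finset.sum_comm]
      exact Finset.sum_congr rfl fun a _ => Finset.sum_congr rfl fun q' _ => by ring
    rw [e]
    refine Finset.sum_le_sum fun q _ => ?_
    rw [← M.wt_sum hσ, Finset.sum_mul]
    exact Finset.sum_le_sum fun a _ =>
      mul_le_mul_of_nonneg_left (M.ff_le S m q a) (M.wt_nonneg hσ hd.1 _ _ _)

end MDP


namespace MDP

variable {Q A : Type} [Fintype Q] [Fintype A]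

/-- `U` is a set of (state, phase) pairs with uniformly positive loss. -/
def BadSet (M : MDP Q A) (S : Set Q) (α : ℝ) (k r : ℕ) (U : Finset (Q × ℕ)) : Prop :=
  ∀ s ≥ k, ∀ q, (q, s % r) ∈ U → α ^ (k + U.card) ≤ M.ff S s q

theorem exists_max_bad (M : MDP Q A) (S : Set Q) (α : ℝ) (k r : ℕ) :
    ∃ U : Finset (Q × ℕ), U ⊆ Finset.univ ×ˢ Finset.range r ∧ M.BadSet S α k r U ∧
      ∀ U' ⊆ Finset.univ ×ˢ Finset.range r, M.BadSet S α k r U' → U'.card ≤ U.card := by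
  obtain ⟨U, hU, hmax⟩ := Finset.exists_max_image
    (((Finset.univ : Finset Q) ×ˢ Finset.range r).powerset.filter (M.BadSet S α k r))
    Finset.card ⟨∅, by simp [BadSet]⟩
  rw [Finset.mem_filter, Finset.mem_powerset] at hU
  exact ⟨U, hU.1, hU.2, fun U' h1 h2 =>
    hmax U' (Finset.mem_filter.2 ⟨Finset.mem_powerset.2 h1, h2⟩)⟩

theorem bad_extend [Nonempty A] (M : MDP Q A) (S : Set Q) {α : ℝ} (hα : 0 < α) (hα1 : α ≤ 1)
    (hαδ : ∀ q a q', 0 < M.δ q a q' → α ≤ M.δ q a q') {k r : ℕ} {U X : Finset (Q × ℕ)}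
    (hU : M.BadSet S α k r U) (hX : X.Nonempty) (hdisj : Disjoint U X)
    (h0 : ∀ q, (q, k % r) ∈ X → q ∉ M.Zs S k)
    (h1 : ∀ s ≥ k, ∀ q, (q, (s + 1) % r) ∈ X → ∀ a,
      (∃ q', 0 < M.δ q a q' ∧ (q', s % r) ∈ U) ∨ (∀ q', 0 < M.δ q a q' → (q', s % r) ∈ X)) :
    M.BadSet S α k r (U ∪ X) := by
  have hc : U.card + 1 ≤ (U ∪ X).card := by
    rw [Finset.card_union_of_disjoint hdisj]
    have := hX.card_pos
    omega
  intro s hs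
  induction s, hs using Nat.le_induction with
  | base =>
    intro q hq
    rcases Finset.mem_union.1 hq with hq | hq
    · exact (pow_le_pow_of_le_one hα.le hα1 (by omega)).trans (hU k le_rfl q hq)
    · exact (pow_le_pow_of_le_one hα.le hα1 (by omega)).trans (M.ff_lb hα hαδ S k q (h0 q hq))
  | succ s hs ih =>
    intro q hq
    rcases Finset.mem_union.1 hq with hq | hq
    · exact (pow_le_pow_of_le_one hα.le hα1 (by omega)).trans (hU (s + 1) (by omega) q hq)
    · obtain ⟨a, ha⟩ := M.ff_attain S s q
      rw [ha]
      rcases h1 s hs q hq a with ⟨q', hq1, hq2⟩ | hall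
      · refine le_trans ?_ (M.le_ex_of_hit hαδ (M.ff_nonneg S s) (by positivity) hq1
          (hU s hs q' hq2))
        rw [← pow_succ']
        exact pow_le_pow_of_le_one hα.le hα1 (by omega)
      · exact M.le_ex fun q' h => ih q' (Finset.mem_union_right _ (hall q' h))

theorem core [Nonempty A] (M : MDP Q A) (S : Set Q) {α : ℝ} (hα : 0 < α) (hα1 : α ≤ 1)
    (hαδ : ∀ q a q', 0 < M.δ q a q' → α ≤ M.δ q a q') :
    ∃ k r : ℕ, 0 < r ∧ k ≤ 2 ^ Fintype.card Q ∧ ∃ (D W : ℕ → Set Q) (γ : ℕ → Q → ℝ),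
      (∀ s t, s % r = t % r → W s = W t) ∧
      (∀ s ≥ k, ∀ q, M.ff S s q < α ^ ((Fintype.card Q + 1) * 2 ^ Fintype.card Q) → q ∈ W s) ∧
      D 0 ⊆ S ∪ W 0 ∧ (∀ s, W s ⊆ D s) ∧ γ 0 = ind S ∧
      (∀ s, ∀ q ∈ D (s + 1), ∃ a, (∀ q', 0 < M.δ q a q' → q' ∈ D s) ∧
        M.ex q a (γ s) ≤ γ (s + 1) q) ∧
      (∀ s, ∀ ε > (0:ℝ), ∃ t, 0 < t ∧ k ≤ t ∧ t % r = s % r ∧ ∀ q ∈ W s, γ t q ≤ ε) := by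
  obtain ⟨k, r, hr, hr2, hk2, ⟨k1, hk1⟩, hZ⟩ := M.Zs_periodic S
  obtain ⟨U, hUsub, hU, hmax⟩ := M.exists_max_bad S α k r
  -- no proper extension
  have hext : ∀ X : Finset (Q × ℕ), X ⊆ Finset.univ ×ˢ Finset.range r → X.Nonempty →
      Disjoint U X → (∀ q, (q, k % r) ∈ X → q ∉ M.Zs S k) →
      (∀ s ≥ k, ∀ q, (q, (s + 1) % r) ∈ X → ∀ a,
      (∃ q', 0 < M.δ q a q' ∧ (q', s % r) ∈ U) ∨
        (∀ q', 0 < M.δ q a q' → (q', s % r) ∈ X)) → False := by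
    intro X hX hne hdisj h0 h1
    have := hmax _ (Finset.union_subset hUsub hX)
      (M.bad_extend S hα hα1 hαδ hU hne hdisj h0 h1)
    rw [Finset.card_union_of_disjoint hdisj] at this
    have := hne.card_pos
    omega
  let W : ℕ → Set Q := fun s => {q | (q, s % r) ∉ U}
  have hWmem : ∀ s q, q ∈ W s ↔ (q, s % r) ∉ U := fun s q => Iff.rfl
  have hWper : ∀ s t, s % r = t % r → W s = W t := by
    intro s t h
    ext q
    rw [hWmem, hWmem, h]
  have hWk : ∀ j, W (k + j) = W j := fun j => hWper _ _ (by rw [hk1]; simp)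
  have hWr : ∀ j, W (j + r) = W j := fun j => hWper _ _ (by simp)
  have hZW : ∀ s ≥ k, M.Zs S s ⊆ W s := by
    intro s hs q hq
    rw [hWmem]
    intro hmem
    have h1 := hU s hs q hmem
    rw [M.ff_zero S s q hq] at h1
    have : 0 < α ^ (k + U.card) := by positivity
    linarith
  have hUcard : U.card ≤ Fintype.card Q * 2 ^ Fintype.card Q := by
    have := Finset.card_le_card hUsub
    rw [Finset.card_product, Finset.card_range, Finset.card_univ] at this
    exact this.trans (Nat.mul_le_mul_left _ hr2)
  have hgap : ∀ s ≥ k, ∀ q,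
      M.ff S s q < α ^ ((Fintype.card Q + 1) * 2 ^ Fintype.card Q) → q ∈ W s := by
    intro s hs q hq
    rw [hWmem]
    intro hmem
    have h1 := hU s hs q hmem
    have h2 : α ^ ((Fintype.card Q + 1) * 2 ^ Fintype.card Q) ≤ α ^ (k + U.card) :=
      pow_le_pow_of_le_one hα.le hα1 (by rw [add_mul]; omega)
    linarith
  have hmodpred : ∀ s t : ℕ, (s + 1) % r = (t + 1) % r → s % r = t % r :=
    fun s t h => Nat.ModEq.add_right_cancel' 1 h
  have hallow : ∀ s, ∀ q ∈ W (s + 1), ∃ a, ∀ q', 0 < M.δ q a q' → q' ∈ W s := by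
    intro s q hq
    by_contra hcon
    push Not at hcon
    refine hext {(q, (s + 1) % r)} ?_ ⟨_, Finset.mem_singleton_self _⟩ ?_ ?_ ?_
    · intro x hx
      rw [Finset.mem_singleton] at hx
      subst hx
      simp [Nat.mod_lt _ hr]
    · rw [Finset.disjoint_singleton_right]; exact hq
    · intro q2 hq2 hz
      rw [Finset.mem_singleton, Prod.mk.injEq] at hq2
      obtain ⟨rfl, hm⟩ := hq2
      rw [← hZ k le_rfl, show k + r = (k + (r - 1)) + 1 by omega] at hz
      obtain ⟨a, ha⟩ := hz
      obtain ⟨q', h1, h2⟩ := hcon a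
      have h3 := hZW _ (by omega) (ha q' h1)
      rw [hWper (k + (r - 1)) s] at h3
      · exact h2 h3
      · apply hmodpred
        rw [← hm, show k + (r - 1) + 1 = k + r by omega]
        simp
    · intro s' hs' q2 hq2 a
      rw [Finset.mem_singleton, Prod.mk.injEq] at hq2
      obtain ⟨rfl, hm⟩ := hq2
      obtain ⟨q', h1, h2⟩ := hcon a
      left
      refine ⟨q', h1, ?_⟩
      rw [hmodpred _ _ hm]
      by_contra h3
      exact h2 h3
  -- restricted Bellman
  let ok : ℕ → Q → A → Prop := fun j q a => ∀ q', 0 < M.δ q a q' → q' ∈ W j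
  let g := M.bell ok (ind (M.Zs S k))
  have hg0 : ∀ j q, 0 ≤ g j q := fun j q => (M.bell_mem ok (ind_nonneg _) (ind_le _) j q).1
  have hg1 : ∀ j q, g j q ≤ 1 := fun j q => (M.bell_mem ok (ind_nonneg _) (ind_le _) j q).2
  have hgle : ∀ j q a, ok j q a → g (j + 1) q ≤ M.ex q a (g j) := fun j q a h => M.bell_le _ h
  have hgat : ∀ j q, q ∈ W (j + 1) → ∃ a, ok j q a ∧ g (j + 1) q = M.ex q a (g j) :=
    fun j q h => M.bell_attain _ (hallow j q h)
  have hgZ : ∀ j, ∀ q ∈ M.Zs S (k + j), g j q = 0 := by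
    intro j
    induction j with
    | zero => exact fun q hq => ind_in hq
    | succ j ih =>
      rintro q ⟨a, ha⟩
      refine le_antisymm ((hgle j q a ?_).trans (M.ex_le fun q' h => (ih q' (ha q' h)).le))
        (hg0 _ _)
      intro q' h
      rw [← hWk]
      exact hZW _ (by omega) (ha q' h)
  have hmono : ∀ j, ∀ q ∈ W j, g (j + r) q ≤ g j q := by
    intro j
    induction j with
    | zero =>
      intro q _
      by_cases hq : q ∈ M.Zs S k
      · rw [zero_add, hgZ r q (by rw [hZ k le_rfl]; exact hq)]
        exact hg0 _ _
      · have : g 0 q = 1 := ind_out hq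
        rw [this]; exact hg1 _ _
    | succ j ih =>
      intro q hq
      obtain ⟨a, ha, he⟩ := hgat j q hq
      rw [he, show j + 1 + r = (j + r) + 1 by ring]
      refine (hgle (j + r) q a ?_).trans (M.ex_mono fun q' h => ih q' (ha q' h))
      intro q' h
      rw [hWr]
      exact ha q' h
  let v : ℕ → Q → ℝ := fun j q => ⨅ i : ℕ, g (j + i * r) q
  have hWir : ∀ j i, W (j + i * r) = W j := fun j i => hWper _ _ (by simp)
  have hbdd : ∀ j q, BddBelow (Set.range fun i : ℕ => g (j + i * r) q) := by
    intro j q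
    exact ⟨0, by rintro _ ⟨i, rfl⟩; exact hg0 _ _⟩
  have hlim : ∀ j, ∀ q ∈ W j,
      Tendsto (fun i : ℕ => g (j + i * r) q) atTop (nhds (v j q)) := by
    intro j q hq
    refine tendsto_atTop_ciInf (antitone_nat_of_succ_le fun i => ?_) (hbdd j q)
    have := hmono (j + i * r) q (by rw [hWir]; exact hq)
    rwa [show j + (i + 1) * r = j + i * r + r by ring]
  have hvper1 : ∀ j, ∀ q ∈ W j, v (j + r) q = v j q := by
    intro j q hq
    have h1 := hlim (j + r) q (by rw [hWr]; exact hq)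
    have h2 := (tendsto_add_atTop_iff_nat 1).2 (hlim j q hq)
    refine tendsto_nhds_unique h1 (h2.congr fun i => ?_)
    rw [show j + (i + 1) * r = j + r + i * r by ring]
  have hvper : ∀ j, ∀ q ∈ W j, v j q = v (j % r) q := by
    intro j q hq
    have key : ∀ i, v (j % r + i * r) q = v (j % r) q := by
      intro i
      induction i with
      | zero => simp
      | succ i ih =>
        rw [← ih, show j % r + (i + 1) * r = j % r + i * r + r by ring]
        refine hvper1 _ _ ?_
        rw [hWper _ j (by simp)]
        exact hq
    have := key (j / r)
    rwa [mul_comm, Nat.mod_add_div] at this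
  have hvnn : ∀ j q, 0 ≤ v j q := fun j q => Real.iInf_nonneg fun i => hg0 _ _
  have hvex : ∀ j, ∀ q ∈ W (j + 1), ∀ a, ok j q a → v (j + 1) q ≤ M.ex q a (v j) := by
    intro j q hq a ha
    refine le_of_tendsto_of_tendsto' (hlim (j + 1) q hq)
      (g := fun i : ℕ => M.ex q a (g (j + i * r))) ?_ ?_
    · unfold ex
      refine tendsto_finset_sum _ fun q' _ => ?_
      rcases (M.δ_nonneg q a q').eq_or_lt with h0 | h0
      · simp [← h0]
      · exact (hlim j q' (ha q' h0)).const_mul _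
    · intro i
      rw [show j + 1 + i * r = (j + i * r) + 1 by ring]
      refine hgle _ q a fun q' h => ?_
      rw [hWir]
      exact ha q' h
  have hv0 : ∀ j, ∀ q ∈ W j, v j q = 0 := by
    by_contra hcon
    push Not at hcon
    obtain ⟨j0, q0, hq0, hne⟩ := hcon
    let E := ((Finset.univ : Finset Q) ×ˢ Finset.range r).filter (fun x => x ∉ U)
    have hE : ∀ j, ∀ q ∈ W j, (q, j % r) ∈ E := by
      intro j q hq
      simp only [E, Finset.mem_filter, Finset.mem_product, Finset.mem_univ, Finset.mem_range,
        true_and]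
      exact ⟨Nat.mod_lt _ hr, hq⟩
    obtain ⟨⟨q1, t1⟩, hx, hxmax⟩ := Finset.exists_max_image E (fun x => v x.2 x.1)
      ⟨_, hE j0 q0 hq0⟩
    set vs := v t1 q1 with hvs
    have hle : ∀ j, ∀ q ∈ W j, v j q ≤ vs := by
      intro j q hq
      rw [hvper j q hq]
      exact hxmax _ (hE j q hq)
    have hvpos : 0 < vs :=
      lt_of_lt_of_le (lt_of_le_of_ne (hvnn _ _) (Ne.symm hne)) (hle j0 q0 hq0)
    let X := E.filter (fun x => v x.2 x.1 = vs)
    have hXmem : ∀ j q, (q, j % r) ∈ X → q ∈ W j ∧ v j q = vs := by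
      intro j q h
      have h1 := Finset.mem_filter.1 h
      have h2 := Finset.mem_filter.1 h1.1
      have h3 : q ∈ W j := h2.2
      exact ⟨h3, by rw [hvper j q h3]; exact h1.2⟩
    refine hext X ?_ ⟨(q1, t1), Finset.mem_filter.2 ⟨hx, rfl⟩⟩ ?_ ?_ ?_
    · exact (Finset.filter_subset _ _).trans (Finset.filter_subset _ _)
    · rw [Finset.disjoint_right]
      intro x hx
      exact (Finset.mem_filter.1 (Finset.mem_filter.1 hx).1).2
    · intro q hq hz
      have h1 : k % r = 0 % r := by rw [hk1]; simp
      rw [h1] at hq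
      have h2 := (hXmem 0 q hq).2
      have h3 : v 0 q ≤ g (0 + 0 * r) q := ciInf_le (hbdd 0 q) 0
      rw [zero_mul, add_zero, hgZ 0 q hz] at h3
      linarith
    · intro s _ q hq a
      by_cases h : ∃ q', 0 < M.δ q a q' ∧ (q', s % r) ∈ U
      · exact Or.inl h
      · push Not at h
        right
        have hok : ok s q a := h
        obtain ⟨hw, hv⟩ := hXmem (s + 1) q hq
        have h1 := hvex s q hw a hok
        rw [hv] at h1
        intro q' hq'
        have h2 := M.ex_eq_max (fun q' h => hle s q' (hok q' h)) h1 q' hq'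
        refine Finset.mem_filter.2 ⟨hE s q' (hok q' hq'), ?_⟩
        rw [← h2]
        exact (hvper s q' (hok q' hq')).symm
  -- assemble
  refine ⟨k, r, hr, hk2, fun s => M.Zs S s ∪ W s, W,
    fun s => if s < k then ind (M.Zs S s) else g (s - k), hWper, hgap, ?_, ?_, ?_, ?_, ?_⟩
  · exact subset_rfl
  · exact fun s => Set.subset_union_right
  · by_cases h : 0 < k
    · simp only [h, if_true]; rfl
    · have : k = 0 := by omega
      simp only [h, if_false]
      rw [Nat.zero_sub]
      show ind (M.Zs S k) = ind S
      rw [this]; rfl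
  · intro s q hq
    by_cases hs : s < k
    · have e1 : (if s + 1 < k then ind (M.Zs S (s + 1)) else g (s + 1 - k))
          = ind (M.Zs S (s + 1)) := by
        split_ifs with h
        · rfl
        · have : s + 1 = k := by omega
          rw [this, Nat.sub_self]; rfl
      simp only [e1, hs, if_true]
      by_cases hqz : q ∈ M.Zs S (s + 1)
      · obtain ⟨a, ha⟩ := hqz
        refine ⟨a, fun q' h => Or.inl (ha q' h), ?_⟩
        exact (M.ex_le fun q' h => (ind_in (ha q' h)).le).trans (ind_nonneg _ _)
      · obtain ⟨a, ha⟩ := hallow s q (hq.resolve_left hqz)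
        refine ⟨a, fun q' h => Or.inr (ha q' h), ?_⟩
        rw [ind_out hqz]
        exact M.ex_le fun q' h => ind_le _ _
    · have hqW : q ∈ W (s + 1) := by
        rcases hq with hq | hq
        · exact hZW _ (by omega) hq
        · exact hq
      obtain ⟨j, rfl⟩ : ∃ j, s = k + j := ⟨s - k, by omega⟩
      rw [add_assoc, hWk] at hqW
      obtain ⟨a, ha, he⟩ := hgat j q hqW
      refine ⟨a, fun q' h => Or.inr ?_, ?_⟩
      · rw [hWk]; exact ha q' h
      · have h1 : ¬ (k + j + 1 < k) := by omega
        simp only [hs, h1, if_false]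
        rw [show k + j + 1 - k = j + 1 by omega, show k + j - k = j by omega, he]
  · intro s ε hε
    have : ∀ᶠ i : ℕ in atTop, ∀ q, q ∈ W s → g (s + i * r) q ≤ ε := by
      rw [eventually_all]
      intro q
      by_cases hq : q ∈ W s
      · have h1 := hlim s q hq
        rw [hv0 s q hq] at h1
        filter_upwards [h1.eventually_le_const hε] with i hi _
        exact hi
      · exact Eventually.of_forall fun i h => absurd h hq
    obtain ⟨i, hi, hi1⟩ := (this.and (eventually_ge_atTop 1)).exists
    have hpos : 0 < i * r := Nat.mul_pos hi1 hr
    refine ⟨k + (s + i * r), by omega, by omega, by rw [hk1]; simp, fun q hq => ?_⟩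
    have h1 : ¬ (k + (s + i * r) < k) := by omega
    simp only [h1, if_false]
    rw [show k + (s + i * r) - k = s + i * r by omega]
    exact hi q hq

end MDP


namespace MDP

variable {Q A : Type} [Fintype Q] [Fintype A]

theorem ff_le_gamma (M : MDP Q A) (S : Set Q) (D : ℕ → Set Q) (γ : ℕ → Q → ℝ)
    (h0 : γ 0 = ind S)
    (hD : ∀ s, ∀ q ∈ D (s + 1), ∃ a, (∀ q', 0 < M.δ q a q' → q' ∈ D s) ∧
      M.ex q a (γ s) ≤ γ (s + 1) q) (s : ℕ) : ∀ q ∈ D s, M.ff S s q ≤ γ s q := by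
  induction s with
  | zero =>
    intro q _
    rw [h0]
    exact le_rfl
  | succ s ih =>
    intro q hq
    obtain ⟨a, ha, hb⟩ := hD s q hq
    exact (M.ff_le S s q a).trans ((M.ex_mono fun q' h => ih q' (ha q' h)).trans hb)

theorem asw_of [Nonempty A] (M : MDP Q A) (S T : Set Q) {α : ℝ} (hα : 0 < α) (hα1 : α ≤ 1)
    (hαδ : ∀ q a q', 0 < M.δ q a q' → α ≤ M.δ q a q') (hST : S ⊆ T)
    {d0 : Q → ℝ} (hd0 : IsDist d0) {m i : ℕ} (hm : 0 < m)
    (hS : ∀ q ∈ S, M.ff S m q < α ^ ((Fintype.card Q + 1) * 2 ^ Fintype.card Q))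
    (h0 : ∀ q, d0 q ≠ 0 → M.ff S i q < α ^ ((Fintype.card Q + 1) * 2 ^ Fintype.card Q)) :
    M.ASWeakly d0 T := by
  obtain ⟨k, r, hr, hk, D, W, γ, hper, hgap, hD0, hWD, hγ0, hD, hlim⟩ := M.core S hα hα1 hαδ
  set c := α ^ ((Fintype.card Q + 1) * 2 ^ Fintype.card Q) with hc
  have hcpos : 0 < c := by positivity
  have hfg := M.ff_le_gamma S D γ hγ0 hD
  -- small values at small times vanish
  have hsmall : ∀ s ≤ k, ∀ q, M.ff S s q < c → M.ff S s q = 0 := by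
    intro s hs q hq
    by_cases hz : q ∈ M.Zs S s
    · exact M.ff_zero S s q hz
    · have h1 := M.ff_lb hα hαδ S s q hz
      have h2 : c ≤ α ^ s := pow_le_pow_of_le_one hα.le hα1 (by
        rw [add_mul, one_mul]; omega)
      linarith
  have hp : ∃ p, S ⊆ W p := by
    by_cases hmk : k ≤ m
    · exact ⟨m, fun q hq => hgap m hmk q (hS q hq)⟩
    · have hz : ∀ q ∈ S, M.ff S m q ≤ 0 := fun q hq => (hsmall m (by omega) q (hS q hq)).le
      have hj : ∀ j, ∀ q ∈ S, M.ff S (j * m) q ≤ 0 := by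
        intro j
        induction j with
        | zero =>
          intro q hq
          rw [zero_mul]
          exact (ind_in hq).le
        | succ j ih =>
          intro q hq
          rw [Nat.succ_mul]
          have := M.ff_subadd S le_rfl hz (j * m) q
          linarith [ih q hq]
      exact ⟨k * m, fun q hq => hgap (k * m) (Nat.le_mul_of_pos_right k hm) q
        ((hj k q hq).trans_lt hcpos)⟩
  obtain ⟨p, hp⟩ := hp
  obtain ⟨t, ht0, htk, htp, ht⟩ := hlim p (c / 2) (by positivity)
  have hWpt : W p = W t := hper _ _ htp.symm
  have htS : ∀ q ∈ S, M.ff S t q ≤ c / 2 := by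
    intro q hq
    exact (hfg t q (hWD t (hWpt ▸ hp hq))).trans (ht q (hp hq))
  have hW0 : W 0 ⊆ W p := by
    intro q hq
    obtain ⟨t0, _, _, h2, h3⟩ := hlim 0 (c / 3) (by positivity)
    have h4 : M.ff S t0 q ≤ c / 3 :=
      (hfg t0 q (hWD t0 (hper 0 t0 h2.symm ▸ hq))).trans (h3 q hq)
    have h5 := M.ff_subadd S (by positivity) htS t0 q
    have h6 := hgap (t0 + t) (by omega) q (by linarith)
    rwa [hper (t0 + t) p] at h6
    rw [Nat.add_mod, h2, htp, ← Nat.add_mod, zero_add]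
  have hDp : D 0 ⊆ W p := fun q hq => (hD0 hq).elim (fun h => hp h) (fun h => hW0 h)
  refine M.glue d0 T (fun d => IsDist d ∧ ∃ s, ∀ q, d q ≠ 0 → q ∈ W s) ⟨hd0, ?_⟩ ?_
  · by_cases hik : k ≤ i
    · exact ⟨i, fun q hq => hgap i hik q (h0 q hq)⟩
    · refine ⟨i + t, fun q hq => hgap _ (by omega) q ?_⟩
      have h1 := hsmall i (by omega) q (h0 q hq)
      have h5 := M.ff_subadd S (by positivity) htS i q
      linarith
  · rintro d ⟨hd, s, hs⟩ ε hε
    obtain ⟨t1, h1, _, h2, h3⟩ := hlim s ε hε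
    have hWs : W s = W t1 := hper _ _ h2.symm
    obtain ⟨π, hπ1, hπ2⟩ := M.evolve D γ hD t1 d hd
      (fun q hq => hWD t1 (hWs ▸ hs q hq))
    have hdist := M.dd_isDist π hd t1
    refine ⟨t1, h1, π, ⟨hdist, p, fun q hq => hDp (hπ1 q hq)⟩, ?_⟩
    have h4 : ∑ q, d q * γ t1 q ≤ ε := by
      calc ∑ q, d q * γ t1 q ≤ ∑ q, d q * ε := by
            refine Finset.sum_le_sum fun q _ => ?_
            by_cases hq : d q = 0
            · simp [hq]
            · exact mul_le_mul_of_nonneg_left (h3 q (hs q hq)) (hd.1 q)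
        _ = ε := by rw [← Finset.sum_mul, hd.2, one_mul]
    have h5 : 1 ≤ mass (M.dd π d t1) T + ∑ q, M.dd π d t1 q * γ 0 q := by
      rw [← hdist.2, mass, ← Finset.sum_add_distrib]
      refine Finset.sum_le_sum fun q _ => ?_
      rw [hγ0]
      have hnn := hdist.1 q
      by_cases hq : q ∈ S
      · rw [Set.indicator_of_mem (hST hq), ind_in hq]
        linarith
      · rw [ind_out hq]
        have : 0 ≤ T.indicator (M.dd π d t1) q := Set.indicator_nonneg (fun q _ => hdist.1 q) q
        linarith
    linarith

/-- The pigeonhole core of the main theorem. -/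
theorem asw_of_many [Nonempty A] (M : MDP Q A) (T : Set Q) {α α0 : ℝ} (hα : 0 < α) (hα1 : α ≤ 1)
    (hαδ : ∀ q a q', 0 < M.δ q a q' → α ≤ M.δ q a q')
    {d0 : Q → ℝ} (hd0 : IsDist d0) (hα0 : 0 < α0) (hα0d : ∀ q, d0 q ≠ 0 → α0 ≤ d0 q)
    {n : ℕ} (hnn : n = Fintype.card Q) (hn : 2 ≤ n) {σ : List (Q × A) → Q → A → ℝ} (hσ : IsStrategy σ)
    (e : Fin (2 ^ n + 1) → ℕ) (he : StrictMono e)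
    (hm : ∀ j, 1 - α0 * α ^ ((n + 2) * 4 ^ n) /
            (n : ℝ) ^ (2 ^ n + 1)
          < mass (M.stepDist σ d0 (e j)) T) : M.ASWeakly d0 T := by
  have hnpos : (0:ℝ) < n := by exact_mod_cast (by omega : 0 < n)
  have hn1 : (1:ℝ) ≤ n := by exact_mod_cast (by omega : 1 ≤ n)
  set c := α ^ ((n + 1) * 2 ^ n) with hc
  have hcpos : 0 < c := by positivity
  have hc1 : c ≤ 1 := pow_le_one₀ hα.le hα1
  have hcn : c / n ≤ 1 := by
    rw [div_le_one hnpos]; linarith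
  have hcn0 : 0 < c / n := by positivity
  let η : ℕ → ℝ := fun j => α0 * (c / n) ^ (j + 1)
  have hηpos : ∀ j, 0 < η j := fun j => by positivity
  have hηanti : ∀ i j, i ≤ j → η j ≤ η i := fun i j hij =>
    mul_le_mul_of_nonneg_left (pow_le_pow_of_le_one hcn0.le hcn (by omega)) hα0.le
  have hηsucc : ∀ j, n * η (j + 1) = c * η j := by
    intro j
    simp only [η]
    rw [pow_succ]
    field_simp
  have hε : α0 * α ^ ((n + 2) * 4 ^ n) / (n : ℝ) ^ (2 ^ n + 1) ≤ η (2 ^ n) := by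
    simp only [η]
    rw [div_pow, ← mul_div_assoc]
    refine div_le_div_of_nonneg_right ?_ (by positivity)
    refine mul_le_mul_of_nonneg_left ?_ hα0.le
    rw [hc, ← pow_mul]
    refine pow_le_pow_of_le_one hα.le hα1 ?_
    have h1 : n + 1 ≤ 2 ^ n := Nat.lt_two_pow_self
    have h2 : 4 ^ n = 2 ^ n * 2 ^ n := by rw [← mul_pow]; norm_num
    rw [h2]
    nlinarith [Nat.mul_le_mul_right (2 ^ n) h1]
  let S : Fin (2 ^ n + 1) → Set Q := fun j => {q | η j ≤ M.stepDist σ d0 (e j) q}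
  obtain ⟨j, j', hne, hSS⟩ : ∃ j j' : Fin (2 ^ n + 1), j ≠ j' ∧ S j = S j' := by
    apply Fintype.exists_ne_map_eq_of_card_lt S
    rw [Fintype.card_fin, Fintype.card_set, ← hnn]
    omega
  wlog hlt : j < j' generalizing j j'
  · exact this j' j hne.symm hSS.symm (lt_of_le_of_ne (not_lt.1 hlt) hne.symm)
  have hdist := fun i => M.stepDist_isDist hσ hd0 i
  have hbound : ∀ l : Fin (2 ^ n + 1),
      ∑ q, M.stepDist σ d0 (e l) q * ind (S l) q < n * η l := by
    intro l
    calc ∑ q, M.stepDist σ d0 (e l) q * ind (S l) q < ∑ q : Q, η l := by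
          refine Finset.sum_lt_sum_of_nonempty ?_ fun q _ => ?_
          · rw [← Finset.card_pos, Finset.card_univ]; omega
          · by_cases hq : q ∈ S l
            · rw [ind_in hq, mul_zero]; exact hηpos _
            · rw [ind_out hq, mul_one]; exact not_le.1 hq
      _ = n * η l := by simp [hnn]
  have hsingle : ∀ (d : Q → ℝ), IsDist d → ∀ R m q, d q * M.ff R m q ≤
      ∑ q, d q * M.ff R m q := by
    intro d hd R m q
    exact Finset.single_le_sum (f := fun q => d q * M.ff R m q)
      (fun q _ => mul_nonneg (hd.1 q) (M.ff_nonneg R m q)) (Finset.mem_univ q)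
  refine M.asw_of (S j) T hα hα1 hαδ ?_ hd0 (m := e j' - e j) (i := e j)
    (Nat.sub_pos_of_lt (he hlt)) ?_ ?_
  all_goals try rw [← hnn]
  · intro q hq
    by_contra hqT
    have h1 := hm j
    have h2 : mass (M.stepDist σ d0 (e j)) T + M.stepDist σ d0 (e j) q ≤ 1 := by
      rw [← (hdist (e j)).2, mass]
      have h3 : M.stepDist σ d0 (e j) q = ∑ q', if q' = q then M.stepDist σ d0 (e j) q' else 0 := by
        simp
      rw [h3, ← Finset.sum_add_distrib]
      refine Finset.sum_le_sum fun q' _ => ?_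
      have h0 := (hdist (e j)).1 q'
      by_cases hq' : q' = q
      · subst hq'
        rw [Set.indicator_of_notMem hqT]; simp
      · rw [if_neg hq', add_zero]
        exact Set.indicator_le_self' (fun _ _ => h0) q'
    have h3 : η j ≤ M.stepDist σ d0 (e j) q := hq
    have h4 := hηanti j (2 ^ n) (by omega)
    linarith
  · intro q hq
    have h1 := M.ff_lower hσ hd0 (S j) (e j' - e j) (e j)
    rw [Nat.add_sub_cancel' (he hlt).le] at h1
    have h2 := hbound j'
    rw [← hSS] at h2
    have h3 := hsingle _ (hdist (e j)) (S j) (e j' - e j) q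
    have h4 : η j ≤ M.stepDist σ d0 (e j) q := hq
    have h5 := mul_le_mul_of_nonneg_right h4 (M.ff_nonneg (S j) (e j' - e j) q)
    have h6 : n * η j' ≤ c * η j := by
      rw [← hηsucc]
      exact mul_le_mul_of_nonneg_left (hηanti _ _ (by exact hlt)) hnpos.le
    have h7 : η j * M.ff (S j) (e j' - e j) q < η j * c := by linarith
    exact lt_of_mul_lt_mul_left h7 (hηpos _).le
  · intro q hq
    have h1 := M.ff_lower hσ hd0 (S j) (e j) 0
    rw [zero_add] at h1
    have h2 := hbound j
    have h3 := hsingle _ (hdist 0) (S j) (e j) q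
    have e0 : M.stepDist σ d0 0 q = d0 q := by rw [stepDist_zero]
    have h4 : α0 ≤ M.stepDist σ d0 0 q := by rw [e0]; exact hα0d q hq
    have h5 := mul_le_mul_of_nonneg_right h4 (M.ff_nonneg (S j) (e j) q)
    have h6 : n * η j ≤ c * α0 := by
      have := hηanti 0 j (by omega)
      have e1 : n * η 0 = c * α0 := by
        simp only [η, zero_add, pow_one]
        field_simp
      rw [← e1]
      exact mul_le_mul_of_nonneg_left this hnpos.le
    have h7 : α0 * M.ff (S j) (e j) q < α0 * c := by linarith
    exact lt_of_mul_lt_mul_left h7 hα0.le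

end MDP

open MDP in
/-- If `d0` is not almost-sure weakly synchronizing in `T`, then for every
strategy at most `N_w = 2^n` distributions in `(M^σ_i)` are strictly
`(1 - ε_w)`-synchronized in `T`, where
`ε_w = α0 * α^((n+2)·4^n) / n^(2^n + 1)`. -/
theorem stmt5 {Q A : Type} [Fintype Q] [Fintype A] (M : MDP Q A)
    (d0 : Q → ℝ) (hd0 : IsDist d0) (T : Set Q) (α α0 : ℝ)
    (hn : 2 ≤ Fintype.card Q)
    (hα : IsLeast {x : ℝ | 0 < x ∧ ∃ q a q', M.δ q a q' = x} α)
    (hα0 : IsLeast {x : ℝ | 0 < x ∧ ∃ q, d0 q = x} α0)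
    (h : ¬ M.ASWeakly d0 T) :
    ∀ σ, IsStrategy σ → ∃ s : Finset ℕ, s.card ≤ 2 ^ Fintype.card Q ∧
      ∀ i : ℕ,
        1 - α0 * α ^ ((Fintype.card Q + 2) * 4 ^ Fintype.card Q) /
            (Fintype.card Q : ℝ) ^ (2 ^ Fintype.card Q + 1)
          < mass (M.stepDist σ d0 i) T → i ∈ s := by
  intro σ hσ
  have hαpos : 0 < α := hα.1.1
  obtain ⟨q1, a1, q1', hδ1⟩ := hα.1.2
  haveI : Nonempty A := ⟨a1⟩
  have hα1 : α ≤ 1 := by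
    rw [← hδ1, ← M.δ_sum q1 a1]
    exact Finset.single_le_sum (f := M.δ q1 a1) (fun q _ => M.δ_nonneg q1 a1 q)
      (Finset.mem_univ q1')
  have hαδ : ∀ q a q', 0 < M.δ q a q' → α ≤ M.δ q a q' :=
    fun q a q' hp => hα.2 ⟨hp, q, a, q', rfl⟩
  have hα0d : ∀ q, d0 q ≠ 0 → α0 ≤ d0 q :=
    fun q hq => hα0.2 ⟨lt_of_le_of_ne (hd0.1 q) (Ne.symm hq), q, rfl⟩
  set I : Set ℕ := {i | 1 - α0 * α ^ ((Fintype.card Q + 2) * 4 ^ Fintype.card Q) /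
            (Fintype.card Q : ℝ) ^ (2 ^ Fintype.card Q + 1)
          < mass (M.stepDist σ d0 i) T} with hI
  have hno : ∀ s : Finset ℕ, (s : Set ℕ) ⊆ I → s.card ≠ 2 ^ Fintype.card Q + 1 := by
    intro s hs hcard
    refine h (M.asw_of_many T hαpos hα1 hαδ hd0 hα0.1.1 hα0d rfl hn hσ
      (s.orderEmbOfFin hcard) (s.orderEmbOfFin hcard).strictMono fun j => ?_)
    exact hs (s.orderEmbOfFin_mem hcard j)
  have hfin : I.Finite := by
    by_contra hinf
    obtain ⟨s, hs, hcard⟩ := Set.Infinite.exists_subset_card_eq hinf (2 ^ Fintype.card Q + 1)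
    exact hno s hs hcard
  refine ⟨hfin.toFinset, ?_, fun i hi => hfin.mem_toFinset.2 hi⟩
  by_contra hcon
  obtain ⟨s, hs, hcard⟩ := Finset.exists_subset_card_eq
    (show 2 ^ Fintype.card Q + 1 ≤ hfin.toFinset.card by omega)
  exact hno s (fun i hi => hfin.mem_toFinset.1 (hs hi)) hcard
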